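/- arXiv:math/0606100 — 3 statements merged into one kernel-verified Lean document; each statement's English description precedes it below -/
import Mathlib

section
/- For every integer d ≥ 4, the set of nonzero homogeneous polynomials F of degree d in four variables over ℂ whose zero set contains a line is contained in a proper algebraic subset of the space of all degree-d forms: there exists a nonzero polynomial P in the coefficients of a degree-d form such that every homogeneous F of degree d for which some 2-dimensional subspace W ⊆ ℂ⁴ satisfies F|_W ≡ 0 has P(coefficients of F) = 0. In particular, a generic surface of degree d ≥ 4 in ℙ³ contains no line. -/
/-!
The space of degree-`d` forms has some dimension `N`, and containing a given line imposes
`d + 1 ≥ 5` independent linear conditions, while lines move in a `4`-dimensional family. So the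
forms vanishing on some line are swept out by families of `N - (d + 1) + 4 < N` parameters, and a
polynomial map from a space of dimension `< N` to `ℂ ^ N` has algebraically dependent components.

Concretely, some `2 × 2` minor of a basis of `W` is nonzero (`exists_chart`), so after permuting
the coordinates by `e`, `W` contains the affine line `(s, 1, a₀ s + a₁, a₂ s + a₃)`. Restricting `F`
to it gives a univariate polynomial in `s` which vanishes identically. Its coefficient at `s ^ p`
expresses the coefficient of `x ^ p y ^ (d - p)` in `F` as a polynomial in `a₀, …, a₃` and in the
coefficients of `F` at monomials not supported on the first two coordinates. These polynomial
expressions are algebraically dependent by transcendence degree (`exists_dependence`), which gives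
the equation on one chart (`exists_chart_equation`); the product over the finitely many `e` is the
required polynomial.
-/

open MvPolynomial

/-- The exponent vectors of the degree-`d` monomials in four variables. -/
abbrev DegMon (d : ℕ) := {m : Fin 4 →₀ ℕ // m.sum (fun _ e => e) = d}

instance finite_degMon (d : ℕ) : Finite (DegMon d) :=
  ((Finsupp.finite_of_degree_le d).subset fun _ hm => le_of_eq hm).to_subtype

lemma DegMon.sum_perm {d : ℕ} (m : DegMon d) (e : Equiv.Perm (Fin 4)) :
    m.1 (e 0) + m.1 (e 1) + m.1 (e 2) + m.1 (e 3) = d := by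
  have h : m.1.degree = d := m.2
  rw [Finsupp.degree_eq_sum, ← Equiv.sum_comp e, Fin.sum_univ_four] at h
  exact h

/-- The degree-`d` monomials that involve only the coordinates `e 0` and `e 1`. -/
def OnLine {d : ℕ} (e : Equiv.Perm (Fin 4)) (m : DegMon d) : Prop :=
  m.1 (e 2) = 0 ∧ m.1 (e 3) = 0

lemma OnLine.ext {d : ℕ} {e : Equiv.Perm (Fin 4)} {m n : DegMon d}
    (hm : OnLine e m) (hn : OnLine e n) (h : m.1 (e 0) = n.1 (e 0)) : m = n := by
  have h1 := m.sum_perm e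
  have h2 := n.sum_perm e
  obtain ⟨hm2, hm3⟩ := hm
  obtain ⟨hn2, hn3⟩ := hn
  apply Subtype.ext
  ext q
  obtain ⟨i, rfl⟩ := e.surjective q
  fin_cases i <;> simp <;> omega

/-- The monomial with exponent vector `m` restricted to the affine line with coordinates
`(s, 1, a₀ s + a₁, a₂ s + a₃)` in the order `e 0, e 1, e 2, e 3`, as a polynomial in `s`. -/
noncomputable def lineRestr {R : Type*} [CommRing R] (e : Equiv.Perm (Fin 4)) (a : Fin 4 → R)
    (m : Fin 4 →₀ ℕ) : Polynomial R :=
  Polynomial.X ^ m (e 0) * (Polynomial.C (a 0) * Polynomial.X + Polynomial.C (a 1)) ^ m (e 2) *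
    (Polynomial.C (a 2) * Polynomial.X + Polynomial.C (a 3)) ^ m (e 3)

lemma map_lineRestr {R S : Type*} [CommRing R] [CommRing S] (f : R →+* S)
    (e : Equiv.Perm (Fin 4)) (a : Fin 4 → R) (m : Fin 4 →₀ ℕ) :
    (lineRestr e a m).map f = lineRestr e (fun i => f (a i)) m := by
  simp [lineRestr]

lemma coeff_lineRestr_onLine {R : Type*} [CommRing R] {d : ℕ} {e : Equiv.Perm (Fin 4)}
    (a : Fin 4 → R) {m n : DegMon d} (hm : OnLine e m) (hn : OnLine e n) [Decidable (n = m)] :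
    (lineRestr e a n.1).coeff (m.1 (e 0)) = if n = m then 1 else 0 := by
  rw [lineRestr, hn.1, hn.2, pow_zero, pow_zero, mul_one, mul_one, Polynomial.coeff_X_pow]
  split_ifs with h1 h2 h2
  · rfl
  · exact absurd (hn.ext hm h1.symm) h2
  · exact absurd (by rw [h2]) h1
  · rfl

lemma eval_eq_sum_degMon {d : ℕ} [Fintype (DegMon d)] {F : MvPolynomial (Fin 4) ℂ}
    (hF : F.IsHomogeneous d) (v : Fin 4 → ℂ) :
    eval v F = ∑ m : DegMon d, coeff m.1 F * ∏ i, v i ^ m.1 i := by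
  classical
  rw [eval_eq']
  have h := Finset.sum_subtype (F := ‹Fintype (DegMon d)›) (p := fun m : Fin 4 →₀ ℕ => m.sum (fun _ e => e) = d)
    ((Finset.univ : Finset (DegMon d)).map (Function.Embedding.subtype _))
    (by intro x; simp) (fun m => coeff m F * ∏ i, v i ^ m i)
  rw [← h]
  refine Finset.sum_subset ?_ ?_
  · intro m hm
    rw [mem_support_iff] at hm
    have : m.sum (fun _ e => e) = d := by
      by_contra hne
      exact hm (hF.coeff_eq_zero hne)
    simpa using this
  · intro m _ hm
    rw [notMem_support_iff.mp hm, zero_mul]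

/-- At least five of the degree-`d` monomials involve only two given coordinates. -/
lemma four_lt_card_onLine {d : ℕ} (hd : 4 ≤ d) (e : Equiv.Perm (Fin 4)) :
    4 < Nat.card {m : DegMon d // OnLine e m} := by
  classical
  let b : Fin 5 → Fin 4 →₀ ℕ := fun p =>
    Finsupp.single (e 0) (p : ℕ) + Finsupp.single (e 1) (d - p)
  have hb : ∀ p, (b p).sum (fun _ e => e) = d := by
    intro p
    change (b p).degree = d
    simp only [b, map_add, Finsupp.degree_single]
    omega
  have hp : ∀ p, OnLine e (⟨b p, hb p⟩ : DegMon d) := by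
    intro p
    constructor <;> simp [b]
  have hinj : Function.Injective
      (fun p => (⟨⟨b p, hb p⟩, hp p⟩ : {m : DegMon d // OnLine e m})) := by
    intro p q h
    have h' : b p = b q := congrArg (fun x => x.1.1) h
    have := DFunLike.congr_fun h' (e 0)
    simp [b] at this
    exact Fin.ext this
  have := Nat.card_le_card_of_injective _ hinj
  rw [Nat.card_fin] at this
  omega

/-- More elements than variables in a polynomial ring satisfy a nontrivial relation. -/
lemma exists_dependence {ι κ : Type} [Finite ι] [Finite κ] (h : Nat.card κ < Nat.card ι)
    (φ : ι → MvPolynomial κ ℂ) : ∃ P : MvPolynomial ι ℂ, P ≠ 0 ∧ aeval φ P = 0 := by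
  by_contra! hcon
  have hind : AlgebraicIndependent ℂ φ := by
    rw [algebraicIndependent_iff]
    intro p hp
    by_contra hne
    exact hcon p hne hp
  have hle := hind.cardinalMk_le_trdeg
  rw [MvPolynomial.trdeg_of_isDomain, Cardinal.lift_uzero] at hle
  have := Cardinal.toNat_le_toNat hle (Cardinal.mk_lt_aleph0 (α := κ))
  simp only [← Nat.card.eq_1] at this
  omega

/-- The equation satisfied by the coefficients of every form containing a line in the chart `e`. -/
lemma exists_chart_equation {d : ℕ} (hd : 4 ≤ d) (e : Equiv.Perm (Fin 4)) :
    ∃ P : MvPolynomial (DegMon d) ℂ, P ≠ 0 ∧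
      ∀ F : MvPolynomial (Fin 4) ℂ, F.IsHomogeneous d →
        (∃ f g : Fin 4 → ℂ, f (e 0) = 1 ∧ f (e 1) = 0 ∧ g (e 0) = 0 ∧ g (e 1) = 1 ∧
          ∀ s : ℂ, eval (s • f + g) F = 0) →
        eval (fun m => coeff m.1 F) P = 0 := by
  classical
  have : Fintype (DegMon d) := Fintype.ofFinite _
  -- The parameters: the coefficients at the remaining monomials, and the slopes of the line.
  let κ := {m : DegMon d // ¬ OnLine e m} ⊕ Fin 4
  let φ : DegMon d → MvPolynomial κ ℂ := fun m =>
    if h : OnLine e m then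
      -∑ n : {m : DegMon d // ¬ OnLine e m}, X (Sum.inl n) *
        (lineRestr e (fun i => (X (Sum.inr i) : MvPolynomial κ ℂ)) n.1.1).coeff (m.1 (e 0))
    else X (Sum.inl ⟨m, h⟩)
  have hcard : Nat.card κ < Nat.card (DegMon d) := by
    have h1 := four_lt_card_onLine hd e
    have h2 := Nat.card_congr (Equiv.sumCompl (fun m : DegMon d => OnLine e m))
    rw [Nat.card_sum] at h2
    have h3 : Nat.card κ = Nat.card {m : DegMon d // ¬ OnLine e m} + 4 := by
      simp only [κ, Nat.card_sum, Nat.card_fin]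
    omega
  obtain ⟨P, hP0, hP⟩ := exists_dependence hcard φ
  refine ⟨P, hP0, ?_⟩
  rintro F hF ⟨f, g, hf0, hf1, hg0, hg1, hv⟩
  let a : Fin 4 → ℂ := ![f (e 2), g (e 2), f (e 3), g (e 3)]
  let z : κ → ℂ := Sum.elim (fun n => coeff n.1.1 F) a
  have hpoly : ∑ m : DegMon d, Polynomial.C (coeff m.1 F) * lineRestr e a m.1 = 0 := by
    apply Polynomial.funext
    intro s
    rw [Polynomial.eval_zero, ← hv s, eval_eq_sum_degMon hF, Polynomial.eval_finsetSum]
    refine Finset.sum_congr rfl fun m _ => ?_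
    rw [← Equiv.prod_comp e, Fin.prod_univ_four]
    simp [lineRestr, a, hf0, hf1, hg0, hg1, mul_comm s]
  have hz : ∀ m, eval z (φ m) = coeff m.1 F := by
    intro m
    by_cases hm : OnLine e m
    · have hc := congrArg (fun p => Polynomial.coeff p (m.1 (e 0))) hpoly
      simp only [Polynomial.finsetSum_coeff, Polynomial.coeff_C_mul, Polynomial.coeff_zero] at hc
      rw [← Fintype.sum_subtype_add_sum_subtype (fun m : DegMon d => OnLine e m)] at hc
      have h1 : ∑ n : {n : DegMon d // OnLine e n},
          coeff n.1.1 F * (lineRestr e a n.1.1).coeff (m.1 (e 0)) = coeff m.1 F := by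
        rw [Finset.sum_eq_single ⟨m, hm⟩]
        · simp [coeff_lineRestr_onLine a hm hm]
        · intro n _ hne
          rw [coeff_lineRestr_onLine a hm n.2, if_neg (fun h => hne (Subtype.ext h)), mul_zero]
        · simp
      rw [h1] at hc
      simp only [φ, dif_pos hm, map_neg, map_sum, map_mul, eval_X]
      rw [eq_comm, eq_neg_iff_add_eq_zero, ← hc]
      congr 1
      refine Finset.sum_congr rfl fun n _ => ?_
      rw [← Polynomial.coeff_map, map_lineRestr]
      simp [z]
    · simp [φ, hm, z]
  have h := congrArg (eval z) hP
  rw [map_zero, ← MvPolynomial.coe_aeval_eq_eval, RingHom.coe_coe, ← AlgHom.comp_apply,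
    comp_aeval] at h
  rw [← h, ← MvPolynomial.coe_aeval_eq_eval, RingHom.coe_coe]
  congr 2
  funext m
  exact (hz m).symm

/-- A plane in `ℂ⁴` projects isomorphically to some pair of coordinates; `f, g` is the basis of
`W` that is mapped to the standard basis. -/
lemma exists_chart (W : Submodule ℂ (Fin 4 → ℂ)) (hW : Module.finrank ℂ W = 2) :
    ∃ e : Equiv.Perm (Fin 4), ∃ f ∈ W, ∃ g ∈ W,
      f (e 0) = 1 ∧ f (e 1) = 0 ∧ g (e 0) = 0 ∧ g (e 1) = 1 := by
  let b := Module.finBasisOfFinrankEq ℂ W hW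
  have hli : LinearIndependent ℂ ![(b 0 : Fin 4 → ℂ), (b 1 : Fin 4 → ℂ)] := by
    have h := b.linearIndependent.map' W.subtype (Submodule.ker_subtype W)
    convert! h using 1
    funext i
    fin_cases i <;> rfl
  have hu : (b 0 : Fin 4 → ℂ) ∈ W := (b 0).2
  have hw : (b 1 : Fin 4 → ℂ) ∈ W := (b 1).2
  generalize (b 0 : Fin 4 → ℂ) = u at *
  generalize (b 1 : Fin 4 → ℂ) = w at *
  rw [LinearIndependent.pair_iff] at hli
  obtain ⟨i, j, hD⟩ : ∃ i j, u i * w j - u j * w i ≠ 0 := by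
    by_contra! hcon
    -- If all minors vanish, then `w i • u - u i • w = 0` for every `i`.
    have hu0 : ∀ i, u i = 0 := by
      intro i
      have := hli (w i) (-u i) (by
        funext j
        have := hcon i j
        simp only [Pi.add_apply, Pi.smul_apply, smul_eq_mul, Pi.zero_apply]
        linear_combination -this)
      simpa using this.2
    have := hli 1 0 (by funext j; simp [hu0 j])
    exact one_ne_zero this.1
  have hij : i ≠ j := by
    rintro rfl
    exact hD (by ring)
  obtain ⟨e, rfl, rfl⟩ : ∃ e : Equiv.Perm (Fin 4), e 0 = i ∧ e 1 = j := by
    clear hD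
    revert i j
    decide
  set D := u (e 0) * w (e 1) - u (e 1) * w (e 0) with hDdef
  refine ⟨e, D⁻¹ • (w (e 1) • u - u (e 1) • w),
    W.smul_mem _ (W.sub_mem (W.smul_mem _ hu) (W.smul_mem _ hw)),
    D⁻¹ • (u (e 0) • w - w (e 0) • u),
    W.smul_mem _ (W.sub_mem (W.smul_mem _ hw) (W.smul_mem _ hu)), ?_, ?_, ?_, ?_⟩ <;>
  simp only [Pi.smul_apply, Pi.sub_apply, smul_eq_mul]
  · rw [inv_mul_eq_one₀ hD, hDdef]; ring
  · ring
  · ring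
  · rw [inv_mul_eq_one₀ hD, hDdef]; ring

/-- For every `d ≥ 4` there is a nonzero polynomial `P` in the coefficients of a degree-`d`
form in four variables such that every nonzero homogeneous `F` of degree `d` whose zero set
contains a line (i.e. `F` vanishes identically on some 2-dimensional subspace `W ⊆ ℂ⁴`)
satisfies `P(coefficients of F) = 0`.  In particular a generic surface of degree `d ≥ 4`
in `ℙ³` contains no line. -/
theorem generic_surface_contains_no_line (d : ℕ) (hd : 4 ≤ d) :
    ∃ P : MvPolynomial {m : Fin 4 →₀ ℕ // m.sum (fun _ e => e) = d} ℂ,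
      P ≠ 0 ∧
      ∀ F : MvPolynomial (Fin 4) ℂ, F.IsHomogeneous d → F ≠ 0 →
        (∃ W : Submodule ℂ (Fin 4 → ℂ), Module.finrank ℂ W = 2 ∧
            ∀ v ∈ W, eval v F = 0) →
        eval (fun m => coeff m.1 F) P = 0 := by
  choose P hP0 hP using fun e : Equiv.Perm (Fin 4) => exists_chart_equation hd e
  refine ⟨∏ e, P e, Finset.prod_ne_zero_iff.mpr fun e _ => hP0 e, ?_⟩
  rintro F hF - ⟨W, hW, hv⟩
  obtain ⟨e, f, hf, g, hg, h1, h2, h3, h4⟩ := exists_chart W hW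
  rw [map_prod]
  exact Finset.prod_eq_zero (Finset.mem_univ e)
    (hP e F hF ⟨f, g, h1, h2, h3, h4, fun s => hv _ (W.add_mem (W.smul_mem s hf) hg)⟩)
end

section
/- Let φ, ψ ∈ ℂ[x,y] be homogeneous binary forms of degree d ≥ 3 such that the surface S : φ(x,y) − ψ(z,t) = 0 in ℙ³ is smooth. Then the number of lines lying on S is exactly d·(d + α), where α is the number of projectivities of ℙ¹ mapping Z(φ) onto Z(ψ). -/
/-!
Smoothness of `φ(x,y) - ψ(z,t) = 0` forces `φ` and `ψ` to have no multiple linear factor, so each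
has exactly `d` distinct zeros in ℙ¹; write them `p i` and `q j`, and split ℂ⁴ as ℂ² ⊕ ℂ² along
`(x, y)` and `(z, t)`. A line `W` on the surface is of one of two kinds (`classify`).

* The projection of `W` to `(x, y)` is not injective. Then `W` contains some `(0, w)` with
  `ψ(w) = 0`, and for any `(u, w')` in `W` the form `ψ` is constant on the affine line `w' + r w`.
  As `ψ` has at least two zeros, this makes `w'` a multiple of `w`
  (`IsSplit.exists_smul_of_const`), so `W` joins a zero of `φ` to a zero of `ψ`. There are `d²`
  such lines, and all of them lie on the surface.
* The projection is an isomorphism. Then `W` is the graph of a matrix `M` with `φ = ψ ∘ M`; the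
  same lemma shows that `M` is invertible, hence that `M` induces a projectivity of `Z(φ)` onto
  `Z(ψ)` (`mapsZeros_of_eval`). Conversely, if `M` maps `Z(φ)` onto `Z(ψ)` then `ψ ∘ M` and `φ`
  are reduced forms of the same degree with the same zeros, so they are proportional
  (`MapsZeros.exists_eval`), and exactly `d` multiples of `M` satisfy `φ = ψ ∘ M`. This gives
  `d · α` lines.

The number `α` is finite because a projectivity is determined by the images of three points, and
`φ` has `d ≥ 3` zeros (`finite_projectivity`).
-/

open MvPolynomial

/-- A line in ℙ³: a 2-dimensional linear subspace of ℂ⁴. -/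
def IsLine (W : Submodule ℂ (Fin 4 → ℂ)) : Prop :=
  Module.finrank ℂ W = 2

/-- The line `W` lies on the surface `F = 0`. -/
def LiesOn (F : MvPolynomial (Fin 4) ℂ) (W : Submodule ℂ (Fin 4 → ℂ)) : Prop :=
  ∀ v ∈ W, eval v F = 0

/-- The surface `F = 0` is smooth: no nonzero point where all partials vanish. -/
def SmoothSurface (F : MvPolynomial (Fin 4) ℂ) : Prop :=
  ∀ v : Fin 4 → ℂ, v ≠ 0 → ∃ i : Fin 4, eval v (pderiv i F) ≠ 0

/-- The polynomial `φ(x,y) - ψ(z,t)` in four variables. -/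
noncomputable def sepForm (φ ψ : MvPolynomial (Fin 2) ℂ) : MvPolynomial (Fin 4) ℂ :=
  rename (fun i : Fin 2 => (⟨i.val, by omega⟩ : Fin 4)) φ -
    rename (fun i : Fin 2 => (⟨i.val + 2, by omega⟩ : Fin 4)) ψ

/-- The zero cone of a binary form: the nonzero vectors of ℂ² on which it vanishes
(a union of 1-dimensional subspaces, i.e. of points of ℙ¹, with 0 removed). -/
def zeroCone (φ : MvPolynomial (Fin 2) ℂ) : Set (Fin 2 → ℂ) :=
  {v | v ≠ 0 ∧ eval v φ = 0}

/-- An invertible matrix represents a projectivity of ℙ¹ mapping `Z(φ)` onto `Z(ψ)`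
iff it maps the zero cone of `φ` onto the zero cone of `ψ`. -/
def MapsZeros (φ ψ : MvPolynomial (Fin 2) ℂ) (M : Matrix (Fin 2) (Fin 2) ℂ) : Prop :=
  M.det ≠ 0 ∧ M.mulVec '' zeroCone φ = zeroCone ψ

/-- The number of projectivities of ℙ¹ mapping `Z(φ)` onto `Z(ψ)`: the number of
classes, modulo nonzero scalars, of invertible matrices mapping the zero cone of `φ`
onto that of `ψ`. -/
noncomputable def numProjectivities (φ ψ : MvPolynomial (Fin 2) ℂ) : ℕ :=
  Nat.card (Quot (fun A B : {M : Matrix (Fin 2) (Fin 2) ℂ // MapsZeros φ ψ M} =>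
    ∃ c : ℂ, c ≠ 0 ∧ (A : Matrix (Fin 2) (Fin 2) ℂ) = c • (B : Matrix (Fin 2) (Fin 2) ℂ)))

/-! ### Binary forms as products of linear forms -/

/-- The determinant of two vectors of the plane; it vanishes iff they are proportional. -/
def br (u v : Fin 2 → ℂ) : ℂ := u 0 * v 1 - u 1 * v 0

/-- The linear form `v ↦ br v p`, whose zeros are the multiples of `p`. -/
noncomputable def lin (p : Fin 2 → ℂ) : MvPolynomial (Fin 2) ℂ :=
  C (p 1) * X 0 - C (p 0) * X 1

lemma eval_lin (p v : Fin 2 → ℂ) : eval v (lin p) = br v p := by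
  simp [lin, br]; ring

lemma exists_smul_of_br {v p : Fin 2 → ℂ} (hp : p ≠ 0) (h : br v p = 0) :
    ∃ s : ℂ, v = s • p := by
  unfold br at h
  by_cases h0 : p 0 = 0
  · have h1 : p 1 ≠ 0 := fun h1 => hp (by ext i; fin_cases i <;> simp [h0, h1])
    refine ⟨v 1 / p 1, ?_⟩
    have hv : v 0 = 0 := by simpa [h0, h1] using h
    ext i; fin_cases i
    · simp [h0, hv]
    · simp [h1]
  · refine ⟨v 0 / p 0, ?_⟩
    ext i; fin_cases i
    · simp [h0]
    · simp; field_simp; linear_combination -h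

lemma br_smul_left (s : ℂ) (u v : Fin 2 → ℂ) : br (s • u) v = s * br u v := by
  simp [br]; ring

lemma br_smul_right (s : ℂ) (u v : Fin 2 → ℂ) : br u (s • v) = s * br u v := by
  simp [br]; ring

lemma br_add_left (u u' v : Fin 2 → ℂ) : br (u + u') v = br u v + br u' v := by
  simp [br]; ring

lemma br_self (u : Fin 2 → ℂ) : br u u = 0 := by
  simp [br]; ring

lemma br_mulVec (M : Matrix (Fin 2) (Fin 2) ℂ) (u v : Fin 2 → ℂ) :
    br (M.mulVec u) (M.mulVec v) = M.det * br u v := by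
  simp [br, Matrix.mulVec, dotProduct, Matrix.det_fin_two]; ring

/-- Vectors that span the plane admit expansions by Cramer's rule. -/
lemma cramer (u v w : Fin 2 → ℂ) : br u v • w = br w v • u + br u w • v := by
  ext i; fin_cases i <;> simp [br] <;> ring

/-- The homogenization of a nonzero complex polynomial splits into linear forms; each unit by
which the degree falls short of `n` contributes a factor vanishing at `(1, 0)`. -/
lemma homogenize_split (n : ℕ) : ∀ f : Polynomial ℂ, f ≠ 0 → f.natDegree ≤ n →
    ∃ c : ℂ, ∃ p : Fin n → Fin 2 → ℂ, c ≠ 0 ∧ (∀ i, p i ≠ 0) ∧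
      f.homogenize n = C c * ∏ i, lin (p i) := by
  induction n with
  | zero =>
    intro f hf hn
    obtain ⟨c, rfl⟩ := Polynomial.natDegree_eq_zero.1 (Nat.le_zero.1 hn)
    exact ⟨c, fun i => i.elim0, by simpa using hf, fun i => i.elim0, by simp⟩
  | succ n ih =>
    intro f hf hn
    by_cases hdeg : f.natDegree ≤ n
    · obtain ⟨c, p, hc, hp, h⟩ := ih f hf hdeg
      refine ⟨-c, Fin.cons ![1, 0] p, neg_ne_zero.2 hc, ?_, ?_⟩
      · intro i
        refine Fin.cases ?_ (fun j => ?_) i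
        · intro h0; simpa using congrFun h0 0
        · simpa using hp j
      · have := Polynomial.homogenize_mul f 1 hdeg (n := 1) (by simp)
        rw [mul_one] at this
        rw [this, h, Fin.prod_univ_succ]
        simp [lin]; ring
    · obtain ⟨a, ha⟩ := IsAlgClosed.exists_root f (by
        rw [Polynomial.degree_eq_natDegree hf]
        exact_mod_cast (by omega : f.natDegree ≠ 0))
      obtain ⟨g, rfl⟩ := Polynomial.dvd_iff_isRoot.2 ha
      have hg : g ≠ 0 := right_ne_zero_of_mul hf
      have hgd : g.natDegree ≤ n := by
        rw [Polynomial.natDegree_mul (Polynomial.X_sub_C_ne_zero a) hg,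
          Polynomial.natDegree_X_sub_C] at hn
        omega
      obtain ⟨c, p, hc, hp, h⟩ := ih g hg hgd
      refine ⟨c, Fin.cons ![a, 1] p, hc, ?_, ?_⟩
      · intro i
        refine Fin.cases ?_ (fun j => ?_) i
        · intro h0; simpa using congrFun h0 1
        · simpa using hp j
      · rw [mul_comm, Polynomial.homogenize_mul _ _ hgd
          (Polynomial.natDegree_X_sub_C a).le, h, Fin.prod_univ_succ]
        simp [lin, Polynomial.homogenize_X]; ring

/-- `φ` is, as a function, `c` times the product of the linear forms vanishing at the pairwise
non-proportional vectors `p i`. These represent the `d` distinct points of `Z(φ)`. -/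
structure IsSplit {d : ℕ} (φ : MvPolynomial (Fin 2) ℂ) (c : ℂ) (p : Fin d → Fin 2 → ℂ) :
    Prop where
  c_ne : c ≠ 0
  p_ne : ∀ i, p i ≠ 0
  eval_eq : ∀ v, eval v φ = c * ∏ i, br v (p i)
  distinct : ∀ i j, i ≠ j → br (p i) (p j) ≠ 0

/-- A form without singular zeros has no multiple linear factor. -/
lemma exists_isSplit {d : ℕ} {φ : MvPolynomial (Fin 2) ℂ} (hφ : φ.IsHomogeneous d)
    (hs : ∀ v : Fin 2 → ℂ, v ≠ 0 → ∃ i, eval v (pderiv i φ) ≠ 0) :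
    ∃ c, ∃ p : Fin d → Fin 2 → ℂ, IsSplit φ c p := by
  set f : Polynomial ℂ := aeval ![Polynomial.X, 1] φ with hf
  have hh : f.homogenize d = φ := Polynomial.homogenize_eq_of_isHomogeneous hφ rfl
  have hφ0 : φ ≠ 0 := by
    rintro rfl
    obtain ⟨i, hi⟩ := hs ![1, 0] (fun h0 => by simpa using congrFun h0 0)
    simp at hi
  have hf0 : f ≠ 0 := by
    intro h0; rw [h0] at hh; exact hφ0 (by simpa using hh.symm)
  have hd : f.natDegree ≤ d := by
    refine (MvPolynomial.aeval_natDegree_le φ hφ.totalDegree_le _ (n := 1) ?_).trans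
      (by simp)
    intro i; fin_cases i <;> simp
  obtain ⟨c, p, hc, hp, h⟩ := homogenize_split d f hf0 hd
  rw [hh] at h
  refine ⟨c, p, hc, hp, fun v => ?_, fun i j hij hb => ?_⟩
  · rw [h]; simp [eval_lin]
  · obtain ⟨k, hk⟩ := hs (p i) (hp i)
    apply hk
    -- both the `i`-th and the `j`-th factor vanish at `p i`
    have hi : eval (p i) (lin (p i)) = 0 := by rw [eval_lin, br_self]
    have hj : eval (p i) (lin (p j)) = 0 := by rw [eval_lin, hb]
    rw [h, ← Finset.mul_prod_erase _ _ (Finset.mem_univ i),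
      ← Finset.mul_prod_erase _ _ (Finset.mem_erase.2 ⟨hij.symm, Finset.mem_univ j⟩)]
    simp [Derivation.leibniz, hi, hj]

/-! ### Coordinates on ℂ⁴ = ℂ² ⊕ ℂ² -/

/-- The first two coordinates `(x, y)` of a point of ℂ⁴. -/
def fs (w : Fin 4 → ℂ) : Fin 2 → ℂ := ![w 0, w 1]

/-- The last two coordinates `(z, t)` of a point of ℂ⁴. -/
def sn (w : Fin 4 → ℂ) : Fin 2 → ℂ := ![w 2, w 3]

lemma ext_fs_sn {w w' : Fin 4 → ℂ} (h1 : fs w = fs w') (h2 : sn w = sn w') : w = w' := by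
  ext i; fin_cases i
  · simpa [fs] using congrFun h1 0
  · simpa [fs] using congrFun h1 1
  · simpa [sn] using congrFun h2 0
  · simpa [sn] using congrFun h2 1

lemma fs_eq (w : Fin 4 → ℂ) : w ∘ (fun i : Fin 2 => (⟨i.val, by omega⟩ : Fin 4)) = fs w := by
  ext i; fin_cases i <;> rfl

lemma sn_eq (w : Fin 4 → ℂ) :
    w ∘ (fun i : Fin 2 => (⟨i.val + 2, by omega⟩ : Fin 4)) = sn w := by
  ext i; fin_cases i <;> rfl

lemma eval_sepForm (φ ψ : MvPolynomial (Fin 2) ℂ) (w : Fin 4 → ℂ) :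
    eval w (sepForm φ ψ) = eval (fs w) φ - eval (sn w) ψ := by
  simp only [sepForm, map_sub, eval_rename, fs_eq, sn_eq]

lemma pderiv_rename_of_ne (f : Fin 2 → Fin 4) (χ : MvPolynomial (Fin 2) ℂ) (k : Fin 4)
    (hk : ∀ i, f i ≠ k) : pderiv k (rename f χ) = 0 := by
  classical
  refine pderiv_eq_zero_of_notMem_vars fun hm => ?_
  obtain ⟨i, -, hi⟩ := Finset.mem_image.1 (vars_rename f χ hm)
  exact hk i hi

lemma eval_pderiv_left (φ ψ : MvPolynomial (Fin 2) ℂ) (w : Fin 4 → ℂ) (k : Fin 2) :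
    eval w (pderiv (⟨k.val, by omega⟩ : Fin 4) (sepForm φ ψ)) = eval (fs w) (pderiv k φ) := by
  have h := pderiv_rename (R := ℂ)
    (f := fun i : Fin 2 => (⟨i.val, by omega⟩ : Fin 4)) (fun i j hij => by
      simpa [Fin.ext_iff] using hij) k φ
  rw [sepForm, map_sub, h, pderiv_rename_of_ne _ ψ, sub_zero, eval_rename, fs_eq]
  intro i hi
  simp only [Fin.ext_iff] at hi
  omega

lemma eval_pderiv_right (φ ψ : MvPolynomial (Fin 2) ℂ) (w : Fin 4 → ℂ) (k : Fin 2) :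
    eval w (pderiv (⟨k.val + 2, by omega⟩ : Fin 4) (sepForm φ ψ)) =
      - eval (sn w) (pderiv k ψ) := by
  have h := pderiv_rename (R := ℂ)
    (f := fun i : Fin 2 => (⟨i.val + 2, by omega⟩ : Fin 4)) (fun i j hij => by
      simpa [Fin.ext_iff] using hij) k ψ
  rw [sepForm, map_sub, h, pderiv_rename_of_ne _ φ, zero_sub, map_neg, eval_rename, sn_eq]
  intro i hi
  simp only [Fin.ext_iff] at hi
  omega

lemma eval_zero_pderiv {d : ℕ} (hd : 3 ≤ d) {ψ : MvPolynomial (Fin 2) ℂ}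
    (hψ : ψ.IsHomogeneous d) (k : Fin 2) : eval (0 : Fin 2 → ℂ) (pderiv k ψ) = 0 := by
  rw [MvPolynomial.eval_zero, constantCoeff_eq]
  exact (hψ.pderiv (i := k)).coeff_eq_zero (by simp; omega)

/-- A singular zero `v` of `φ` would give the singular point `(v, 0)` of the surface. -/
lemma smooth_left {d : ℕ} (hd : 3 ≤ d) {φ ψ : MvPolynomial (Fin 2) ℂ}
    (hψ : ψ.IsHomogeneous d) (h : SmoothSurface (sepForm φ ψ)) (v : Fin 2 → ℂ) (hv : v ≠ 0) :
    ∃ i, eval v (pderiv i φ) ≠ 0 := by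
  by_contra! hc
  have hf : fs ![v 0, v 1, 0, 0] = v := by ext i; fin_cases i <;> rfl
  have hs : sn ![v 0, v 1, 0, 0] = 0 := by ext i; fin_cases i <;> rfl
  obtain ⟨i, hi⟩ := h ![v 0, v 1, 0, 0] (fun h0 => hv (by
    rw [← hf, h0]; ext i; fin_cases i <;> rfl))
  apply hi
  fin_cases i
  · exact (eval_pderiv_left φ ψ _ 0).trans (by rw [hf, hc])
  · exact (eval_pderiv_left φ ψ _ 1).trans (by rw [hf, hc])
  · exact (eval_pderiv_right φ ψ _ 0).trans (by rw [hs, eval_zero_pderiv hd hψ, neg_zero])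
  · exact (eval_pderiv_right φ ψ _ 1).trans (by rw [hs, eval_zero_pderiv hd hψ, neg_zero])

/-- A singular zero `v` of `ψ` would give the singular point `(0, v)` of the surface. -/
lemma smooth_right {d : ℕ} (hd : 3 ≤ d) {φ ψ : MvPolynomial (Fin 2) ℂ}
    (hφ : φ.IsHomogeneous d) (h : SmoothSurface (sepForm φ ψ)) (v : Fin 2 → ℂ) (hv : v ≠ 0) :
    ∃ i, eval v (pderiv i ψ) ≠ 0 := by
  by_contra! hc
  have hf : fs ![0, 0, v 0, v 1] = 0 := by ext i; fin_cases i <;> rfl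
  have hs : sn ![0, 0, v 0, v 1] = v := by ext i; fin_cases i <;> rfl
  obtain ⟨i, hi⟩ := h ![0, 0, v 0, v 1] (fun h0 => hv (by
    rw [← hs, h0]; ext i; fin_cases i <;> rfl))
  apply hi
  fin_cases i
  · exact (eval_pderiv_left φ ψ _ 0).trans (by rw [hf, eval_zero_pderiv hd hφ])
  · exact (eval_pderiv_left φ ψ _ 1).trans (by rw [hf, eval_zero_pderiv hd hφ])
  · exact (eval_pderiv_right φ ψ _ 0).trans (by rw [hs, hc, neg_zero])
  · exact (eval_pderiv_right φ ψ _ 1).trans (by rw [hs, hc, neg_zero])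

/-! ### Zeros of split forms -/

lemma br_comm (u v : Fin 2 → ℂ) : br u v = - br v u := by
  simp [br]; ring

lemma br_eq_zero_trans {p u v : Fin 2 → ℂ} (hp : p ≠ 0) (hu : br u p = 0) (hv : br v p = 0) :
    br u v = 0 := by
  obtain ⟨s, rfl⟩ := exists_smul_of_br hp hu
  obtain ⟨t, rfl⟩ := exists_smul_of_br hp hv
  rw [br_smul_left, br_smul_right, br_self]; simp

section Split

variable {d : ℕ} {φ ψ : MvPolynomial (Fin 2) ℂ} {c c' : ℂ} {p q : Fin d → Fin 2 → ℂ}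
  {M : Matrix (Fin 2) (Fin 2) ℂ}

lemma IsSplit.eval_eq_zero (h : IsSplit φ c p) {v : Fin 2 → ℂ} :
    eval v φ = 0 ↔ ∃ i, br v (p i) = 0 := by
  rw [h.eval_eq]
  simp [h.c_ne, Finset.prod_eq_zero_iff]

lemma IsSplit.eval_root (h : IsSplit φ c p) (i : Fin d) : eval (p i) φ = 0 :=
  h.eval_eq_zero.2 ⟨i, br_self _⟩

lemma IsSplit.eval_smul (h : IsSplit φ c p) (s : ℂ) (v : Fin 2 → ℂ) :
    eval (s • v) φ = s ^ d * eval v φ := by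
  rw [h.eval_eq, h.eval_eq]
  simp only [br_smul_left, Finset.prod_mul_distrib, Finset.prod_const, Finset.card_univ,
    Fintype.card_fin]
  ring

lemma IsSplit.exists_smul (h : IsSplit φ c p) {v : Fin 2 → ℂ} (hv : v ≠ 0)
    (h0 : eval v φ = 0) : ∃ i, ∃ t : ℂ, t ≠ 0 ∧ v = t • p i := by
  obtain ⟨i, hi⟩ := h.eval_eq_zero.1 h0
  obtain ⟨t, rfl⟩ := exists_smul_of_br (h.p_ne i) hi
  exact ⟨i, t, fun ht => hv (by simp [ht]), rfl⟩

/-- The points `p i` of the projective line are distinct. -/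
lemma IsSplit.index_eq (h : IsSplit φ c p) {v : Fin 2 → ℂ} (hv : v ≠ 0) {i j : Fin d}
    (hi : br v (p i) = 0) (hj : br v (p j) = 0) : i = j := by
  by_contra hij
  refine h.distinct i j hij (br_eq_zero_trans hv ?_ ?_)
  · rw [br_comm, hi, neg_zero]
  · rw [br_comm, hj, neg_zero]

/-- The form does not vanish identically on an affine line missing the origin: the points of
such a line are pairwise non-proportional, and the form has only `d` zeros in ℙ¹. -/
lemma IsSplit.exists_eval_ne (h : IsSplit φ c p) {w w' : Fin 2 → ℂ} (hw : br w' w ≠ 0) :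
    ∃ r : ℂ, eval (w' + r • w) φ ≠ 0 := by
  by_contra! h0
  choose g hg using fun r => h.eval_eq_zero.1 (h0 r)
  obtain ⟨r, r', hrr, hne⟩ : ∃ r r', g r = g r' ∧ r ≠ r' := by
    have := not_injective_infinite_finite g
    simpa [Function.Injective] using this
  have h1 := hg r
  have h2 := hg r'
  rw [← hrr] at h2
  simp only [br_add_left, br_smul_left] at h1 h2
  have h3 : br w (p (g r)) = 0 := by
    have : (r - r') * br w (p (g r)) = 0 := by linear_combination h1 - h2
    exact (mul_eq_zero.1 this).resolve_left (sub_ne_zero.2 hne)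
  have h4 : br w' (p (g r)) = 0 := by simpa [h3] using h1
  exact hw (br_eq_zero_trans (h.p_ne _) h4 h3)

/-- A form with at least two distinct zeros and no multiple ones is not constant along a line
whose direction `w` is a zero of it, unless the line passes through the origin: the line meets
the span of any other zero, so the constant would be `0`. -/
lemma IsSplit.exists_smul_of_const (h : IsSplit φ c p) (hd : 3 ≤ d) {w w' : Fin 2 → ℂ}
    (hw : w ≠ 0) (hw0 : eval w φ = 0) {C : ℂ} (hC : ∀ r : ℂ, eval (w' + r • w) φ = C) :
    ∃ k : ℂ, w' = k • w := by
  refine exists_smul_of_br hw ?_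
  by_contra hne
  obtain ⟨r, hr⟩ := h.exists_eval_ne hne
  obtain ⟨i, hi⟩ := h.eval_eq_zero.1 hw0
  have : Nontrivial (Fin d) := Fin.nontrivial_iff_two_le.2 (by omega)
  obtain ⟨j, hj⟩ := exists_ne i
  have hwj : br w (p j) ≠ 0 := fun h0 => hj (h.index_eq hw h0 hi)
  -- the line meets the zero line spanned by `p j`
  have hz : eval (w' + (-(br w' (p j) / br w (p j))) • w) φ = 0 :=
    h.eval_eq_zero.2 ⟨j, by rw [br_add_left, br_smul_left]; field_simp; ring⟩
  exact hr (by rw [hC, ← hC (-(br w' (p j) / br w (p j))), hz])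

lemma IsSplit.exists_ne_zero (h : IsSplit φ c p) : ∃ v : Fin 2 → ℂ, eval v φ ≠ 0 := by
  obtain ⟨r, hr⟩ := h.exists_eval_ne (w := ![1, 0]) (w' := ![0, 1]) (by simp [br])
  exact ⟨_, hr⟩

/-! ### Projectivities between the zero sets -/

lemma MapsZeros.exists_image (hM : MapsZeros φ ψ M) (h : IsSplit φ c p) (h' : IsSplit ψ c' q)
    (i : Fin d) : ∃ j, ∃ t : ℂ, t ≠ 0 ∧ M.mulVec (p i) = t • q j := by
  have : M.mulVec (p i) ∈ zeroCone ψ := by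
    rw [← hM.2]
    exact ⟨p i, ⟨h.p_ne i, h.eval_root i⟩, rfl⟩
  exact h'.exists_smul this.1 this.2

/-- Two reduced forms of the same degree with the same zeros are proportional. -/
lemma MapsZeros.exists_eval (hM : MapsZeros φ ψ M) (h : IsSplit φ c p) (h' : IsSplit ψ c' q) :
    ∃ k : ℂ, k ≠ 0 ∧ ∀ v, eval (M.mulVec v) ψ = k * eval v φ := by
  choose σ t ht hσ using hM.exists_image h h'
  have hinj : Function.Injective σ := by
    intro i j hij
    by_contra hne
    have hb := br_mulVec M (p i) (p j)
    rw [hσ, hσ, hij, br_smul_left, br_smul_right, br_self] at hb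
    simp only [mul_zero] at hb
    exact mul_ne_zero hM.1 (h.distinct i j hne) hb.symm
  have hbij : Function.Bijective σ := Finite.injective_iff_bijective.1 hinj
  have hT : ∏ i, t i ≠ 0 := Finset.prod_ne_zero_iff.2 fun i _ => ht i
  refine ⟨c' / c * M.det ^ d / ∏ i, t i, ?_, fun v => ?_⟩
  · exact div_ne_zero (mul_ne_zero (div_ne_zero h'.c_ne h.c_ne) (pow_ne_zero _ hM.1)) hT
  · have key : (∏ i, t i) * ∏ j, br (M.mulVec v) (q j) = M.det ^ d * ∏ i, br v (p i) := by
      rw [← hbij.prod_comp (fun j => br (M.mulVec v) (q j)), ← Finset.prod_mul_distrib]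
      have : ∀ i, t i * br (M.mulVec v) (q (σ i)) = M.det * br v (p i) := fun i => by
        rw [← br_smul_right, ← hσ, br_mulVec]
      rw [Finset.prod_congr rfl fun i _ => this i, Finset.prod_mul_distrib]
      simp
    rw [h.eval_eq, h'.eval_eq]
    have hc := h.c_ne
    field_simp
    linear_combination c' * key

lemma mapsZeros_of_eval (h : IsSplit φ c p) (h' : IsSplit ψ c' q) (hd : 3 ≤ d)
    (hM : ∀ v, eval v φ = eval (M.mulVec v) ψ) : MapsZeros φ ψ M := by
  have hdet : M.det ≠ 0 := by
    intro hdet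
    obtain ⟨v, hv, hMv⟩ := Matrix.exists_mulVec_eq_zero_iff.2 hdet
    have h0 : eval v φ = 0 := by
      have := h'.eval_smul 0 0
      rw [hM, hMv]
      rw [zero_pow (by omega)] at this
      simpa using this
    -- `φ` is constant in the direction of the kernel, so every vector is a multiple of `v`
    have hall : ∀ v', ∃ k : ℂ, v' = k • v := fun v' =>
      h.exists_smul_of_const hd hv h0 (C := eval v' φ) fun r => by
        rw [hM, hM, Matrix.mulVec_add, Matrix.mulVec_smul, hMv, smul_zero, add_zero]
    obtain ⟨k, hk⟩ := hall ![1, 0]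
    obtain ⟨l, hl⟩ := hall ![0, 1]
    have : br ![1, 0] ![0, 1] = 0 := by
      rw [hk, hl, br_smul_left, br_smul_right, br_self]; simp
    simp [br] at this
  have hu : IsUnit M.det := isUnit_iff_ne_zero.2 hdet
  refine ⟨hdet, Set.Subset.antisymm ?_ ?_⟩
  · rintro _ ⟨v, ⟨hv, hv0⟩, rfl⟩
    refine ⟨fun h0 => hdet (Matrix.exists_mulVec_eq_zero_iff.1 ⟨v, hv, h0⟩), ?_⟩
    rw [← hM, hv0]
  · rintro w ⟨hw, hw0⟩
    have hinv : M.mulVec (M⁻¹.mulVec w) = w := by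
      rw [Matrix.mulVec_mulVec, Matrix.mul_nonsing_inv _ hu, Matrix.one_mulVec]
    refine ⟨M⁻¹.mulVec w, ⟨fun h0 => hw ?_, ?_⟩, hinv⟩
    · rw [← hinv, h0, Matrix.mulVec_zero]
    · rw [hM, hinv, hw0]

/-- A projectivity of ℙ¹ is determined by the images of three points. -/
lemma eq_smul_of_three {M N : Matrix (Fin 2) (Fin 2) ℂ} (hM : M.det ≠ 0) (hN : N.det ≠ 0)
    {u v w : Fin 2 → ℂ} (huv : br u v ≠ 0) (huw : br u w ≠ 0) (hwv : br w v ≠ 0)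
    (h1 : br (M.mulVec u) (N.mulVec u) = 0) (h2 : br (M.mulVec v) (N.mulVec v) = 0)
    (h3 : br (M.mulVec w) (N.mulVec w) = 0) : ∃ s : ℂ, s ≠ 0 ∧ M = s • N := by
  have hne : ∀ x y, br x y ≠ 0 → N.mulVec x ≠ 0 := fun x y hxy h0 => by
    have := br_mulVec N x y
    rw [h0] at this
    exact mul_ne_zero hN hxy (by rw [← this]; simp [br])
  obtain ⟨a, ha⟩ := exists_smul_of_br (hne u v huv) h1
  obtain ⟨b, hb⟩ := exists_smul_of_br
    (hne v u (by rw [br_comm]; exact neg_ne_zero.2 huv)) h2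
  obtain ⟨e, he⟩ := exists_smul_of_br (hne w v hwv) h3
  have hN' : Function.Injective N.mulVec :=
    Matrix.mulVec_injective_iff_isUnit.2 ((Matrix.isUnit_iff_isUnit_det _).2 hN.isUnit)
  -- comparing the two expansions of `M w` in the basis `N u`, `N v`
  have hvec : (br w v * a) • u + (br u w * b) • v = (br w v * e) • u + (br u w * e) • v := by
    apply hN'
    have e1 := congrArg M.mulVec (cramer u v w)
    have e2 := congrArg N.mulVec (cramer u v w)
    simp only [Matrix.mulVec_add, Matrix.mulVec_smul, ha, hb, he] at e1 e2 ⊢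
    simp only [mul_smul]
    rw [← e1, smul_comm, e2, smul_add, smul_comm e, smul_comm e (br u w)]
  have hae : a = e := by
    have := congrArg (br · v) hvec
    simp only [br_add_left, br_smul_left, br_self, mul_zero, add_zero] at this
    exact mul_left_cancel₀ hwv (mul_right_cancel₀ huv this)
  have hbe : b = e := by
    have := congrArg (br u ·) hvec
    have h' : ∀ x y z : Fin 2 → ℂ, br x (y + z) = br x y + br x z := fun x y z => by
      simp [br]; ring
    simp only [h', br_smul_right, br_self, mul_zero, zero_add] at this
    exact mul_left_cancel₀ huw (mul_right_cancel₀ huv this)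
  subst hae
  subst hbe
  refine ⟨b, ?_, ?_⟩
  · rintro rfl
    exact hM (Matrix.exists_mulVec_eq_zero_iff.1
      ⟨u, fun h0 => huv (by simp [h0, br]), by simpa using ha⟩)
  · apply Matrix.toLin'.injective
    apply LinearMap.ext
    intro x
    have hx := cramer u v x
    have : br u v • M.mulVec x = br u v • (b • N.mulVec x) := by
      rw [← Matrix.mulVec_smul, hx, smul_comm, ← Matrix.mulVec_smul N, hx]
      simp only [Matrix.mulVec_add, Matrix.mulVec_smul, ha, hb, smul_add]
      rw [smul_comm b, smul_comm b (br u x)]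
    simpa [Matrix.smul_mulVec] using smul_right_injective _ huv this

end Split
/-! ### Counting matrices -/

/-- The matrices carrying `ψ` to `φ` by substitution. Their graphs are the lines on the surface
that meet neither `x = y = 0` nor `z = t = 0`. -/
def Transporter (φ ψ : MvPolynomial (Fin 2) ℂ) : Type :=
  {M : Matrix (Fin 2) (Fin 2) ℂ // ∀ v, eval v φ = eval (M.mulVec v) ψ}

/-- The type of projectivities mapping `Z(φ)` onto `Z(ψ)`. -/
abbrev Projectivity (φ ψ : MvPolynomial (Fin 2) ℂ) : Type :=
  Quot (fun A B : {M : Matrix (Fin 2) (Fin 2) ℂ // MapsZeros φ ψ M} =>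
    ∃ c : ℂ, c ≠ 0 ∧ (A : Matrix (Fin 2) (Fin 2) ℂ) = c • (B : Matrix (Fin 2) (Fin 2) ℂ))

section Count

variable {d : ℕ} {φ ψ : MvPolynomial (Fin 2) ℂ} {c c' : ℂ} {p q : Fin d → Fin 2 → ℂ}

/-- A projectivity is determined by its action on the `d ≥ 3` zeros of `φ`. -/
lemma finite_projectivity (h : IsSplit φ c p) (h' : IsSplit ψ c' q) (hd : 3 ≤ d) :
    Finite (Projectivity φ ψ) := by
  choose g t ht hg using
    fun (M : {M : Matrix (Fin 2) (Fin 2) ℂ // MapsZeros φ ψ M}) => M.2.exists_image h h'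
  refine Finite.of_injective (fun a : Projectivity φ ψ => g a.out) fun a b hab => ?_
  rw [← Quot.out_eq a, ← Quot.out_eq b]
  apply Quot.sound
  have hb : ∀ i, br (a.out.1.mulVec (p i)) (b.out.1.mulVec (p i)) = 0 := fun i => by
    have : g a.out i = g b.out i := congrFun hab i
    rw [hg, hg, this, br_smul_left, br_smul_right, br_self]; simp
  refine eq_smul_of_three a.out.2.1 b.out.2.1
    (h.distinct ⟨0, by omega⟩ ⟨1, by omega⟩ (by simp))
    (h.distinct ⟨0, by omega⟩ ⟨2, by omega⟩ (by simp))
    (h.distinct ⟨2, by omega⟩ ⟨1, by omega⟩ (by simp)) (hb _) (hb _) (hb _)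

lemma equivalence_scaling : Equivalence
    (fun A B : {M : Matrix (Fin 2) (Fin 2) ℂ // MapsZeros φ ψ M} =>
      ∃ c : ℂ, c ≠ 0 ∧ (A : Matrix (Fin 2) (Fin 2) ℂ) = c • (B : Matrix (Fin 2) (Fin 2) ℂ)) where
  refl A := ⟨1, one_ne_zero, by simp⟩
  symm := by
    rintro A B ⟨s, hs, h⟩
    exact ⟨s⁻¹, inv_ne_zero hs, by rw [h, smul_smul, inv_mul_cancel₀ hs, one_smul]⟩
  trans := by
    rintro A B C ⟨s, hs, h⟩ ⟨t, ht, h'⟩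
    exact ⟨s * t, mul_ne_zero hs ht, by rw [h, h', smul_smul]⟩

/-- Every projectivity has a representative carrying `ψ` to `φ` exactly. -/
lemma exists_transporter (h : IsSplit φ c p) (h' : IsSplit ψ c' q) (hd : 3 ≤ d)
    (a : Projectivity φ ψ) : ∃ N : {M : Matrix (Fin 2) (Fin 2) ℂ // MapsZeros φ ψ M},
      Quot.mk _ N = a ∧ ∀ v, eval v φ = eval (N.1.mulVec v) ψ := by
  obtain ⟨M, rfl⟩ := Quot.exists_rep a
  obtain ⟨k, hk, hM⟩ := M.2.exists_eval h h'
  obtain ⟨z, hz⟩ := IsAlgClosed.exists_pow_nat_eq k⁻¹ (by omega : 0 < d)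
  have hz0 : z ≠ 0 := by
    rintro rfl
    rw [zero_pow (by omega)] at hz
    exact inv_ne_zero hk hz.symm
  have hN : ∀ v, eval v φ = eval ((z • M.1).mulVec v) ψ := fun v => by
    rw [Matrix.smul_mulVec, h'.eval_smul, hz, hM, inv_mul_cancel_left₀ hk]
  exact ⟨⟨z • M.1, mapsZeros_of_eval h h' hd hN⟩, Quot.sound ⟨z, hz0, rfl⟩, hN⟩

/-- The representatives of a projectivity carrying `ψ` to `φ` form a torsor under the `d`-th
roots of unity. -/
lemma exists_transporter_equiv (h : IsSplit φ c p) (h' : IsSplit ψ c' q) (hd : 3 ≤ d) :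
    Nonempty (Projectivity φ ψ × rootsOfUnity d ℂ ≃ Transporter φ ψ) := by
  choose N hNq hN using exists_transporter h h' hd
  let f : Projectivity φ ψ × rootsOfUnity d ℂ → Transporter φ ψ := fun x =>
    ⟨((x.2 : ℂˣ) : ℂ) • (N x.1).1, fun v => by
      have : ((x.2 : ℂˣ) : ℂ) ^ d = 1 := by
        have := congrArg Units.val ((mem_rootsOfUnity _ _).1 x.2.2)
        rwa [Units.val_pow_eq_pow_val, Units.val_one] at this
      rw [Matrix.smul_mulVec, h'.eval_smul, this, one_mul, hN]⟩
  refine ⟨Equiv.ofBijective f ⟨?_, ?_⟩⟩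
  · rintro ⟨a, ζ⟩ ⟨b, ξ⟩ hab
    have hab' : ((ζ : ℂˣ) : ℂ) • (N a).1 = ((ξ : ℂˣ) : ℂ) • (N b).1 := congrArg Subtype.val hab
    have : a = b := by
      rw [← hNq a, ← hNq b]
      refine Quot.sound ⟨((ζ : ℂˣ) : ℂ)⁻¹ * ((ξ : ℂˣ) : ℂ), by simp, ?_⟩
      rw [mul_smul, ← hab', smul_smul, inv_mul_cancel₀ (Units.ne_zero _), one_smul]
    subst this
    have hne : (N a).1 ≠ 0 := fun h0 => (N a).2.1 (by rw [h0]; simp)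
    have hζ := smul_left_injective ℂ hne hab'
    rw [Prod.mk.injEq]
    exact ⟨rfl, Subtype.ext (Units.ext hζ)⟩
  · rintro ⟨M, hM⟩
    have hMZ := mapsZeros_of_eval h h' hd hM
    set a : Projectivity φ ψ := Quot.mk _ ⟨M, hMZ⟩ with ha
    obtain ⟨s, hs, hsM⟩ := equivalence_scaling.eqvGen_iff.1
      (Quot.eqvGen_exact (ha.symm.trans (hNq a).symm))
    change M = s • (N a).1 at hsM
    have hsd : s ^ d = 1 := by
      obtain ⟨v, hv⟩ := h.exists_ne_zero
      have := hM v
      rw [hsM, Matrix.smul_mulVec, h'.eval_smul, ← hN] at this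
      exact mul_right_cancel₀ hv (by rw [← this, one_mul])
    refine ⟨⟨a, ⟨Units.mk0 s hs, ?_⟩⟩, ?_⟩
    · rw [mem_rootsOfUnity]; ext; simpa using hsd
    · exact Subtype.ext hsM.symm

lemma finite_transporter (h : IsSplit φ c p) (h' : IsSplit ψ c' q) (hd : 3 ≤ d) :
    Finite (Transporter φ ψ) := by
  obtain ⟨e⟩ := exists_transporter_equiv h h' hd
  have := finite_projectivity h h' hd
  have : NeZero d := ⟨by omega⟩
  exact Finite.of_equiv _ e

lemma card_transporter (h : IsSplit φ c p) (h' : IsSplit ψ c' q) (hd : 3 ≤ d) :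
    Nat.card (Transporter φ ψ) = d * numProjectivities φ ψ := by
  obtain ⟨e⟩ := exists_transporter_equiv h h' hd
  have : NeZero d := ⟨by omega⟩
  rw [← Nat.card_congr e, Nat.card_prod, Complex.card_rootsOfUnity, mul_comm]
  rfl

end Count

/-! ### Lines in ℙ³ -/

/-- The linear map `v ↦ (A v, B v)` from the plane to ℂ⁴. -/
def pairMap (A B : Matrix (Fin 2) (Fin 2) ℂ) : (Fin 2 → ℂ) →ₗ[ℂ] (Fin 4 → ℂ) where
  toFun v := ![A.mulVec v 0, A.mulVec v 1, B.mulVec v 0, B.mulVec v 1]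
  map_add' u v := by ext i; fin_cases i <;> simp [Matrix.mulVec_add]
  map_smul' s v := by ext i; fin_cases i <;> simp [Matrix.mulVec_smul]

/-- The subspace of ℂ⁴ parametrized by `v ↦ (A v, B v)`. -/
def pairLine (A B : Matrix (Fin 2) (Fin 2) ℂ) : Submodule ℂ (Fin 4 → ℂ) :=
  LinearMap.range (pairMap A B)

lemma fs_pairMap (A B : Matrix (Fin 2) (Fin 2) ℂ) (v : Fin 2 → ℂ) :
    fs (pairMap A B v) = A.mulVec v := by
  ext i; fin_cases i <;> rfl

lemma sn_pairMap (A B : Matrix (Fin 2) (Fin 2) ℂ) (v : Fin 2 → ℂ) :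
    sn (pairMap A B v) = B.mulVec v := by
  ext i; fin_cases i <;> rfl

lemma mem_pairLine {A B : Matrix (Fin 2) (Fin 2) ℂ} {w : Fin 4 → ℂ} :
    w ∈ pairLine A B ↔ ∃ v, fs w = A.mulVec v ∧ sn w = B.mulVec v := by
  constructor
  · rintro ⟨v, rfl⟩
    exact ⟨v, fs_pairMap A B v, sn_pairMap A B v⟩
  · rintro ⟨v, h1, h2⟩
    exact ⟨v, ext_fs_sn (by rw [fs_pairMap, h1]) (by rw [sn_pairMap, h2])⟩

lemma isLine_pairLine {A B : Matrix (Fin 2) (Fin 2) ℂ}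
    (h : ∀ v, A.mulVec v = 0 → B.mulVec v = 0 → v = 0) : IsLine (pairLine A B) := by
  have hinj : Function.Injective (pairMap A B) := by
    rw [injective_iff_map_eq_zero]
    intro v hv
    apply h v
    · rw [← fs_pairMap A B, hv]; ext i; fin_cases i <;> rfl
    · rw [← sn_pairMap A B, hv]; ext i; fin_cases i <;> rfl
  rw [IsLine, pairLine, LinearMap.finrank_range_of_inj hinj]
  simp

lemma liesOn_pairLine {φ ψ : MvPolynomial (Fin 2) ℂ} {A B : Matrix (Fin 2) (Fin 2) ℂ} :
    LiesOn (sepForm φ ψ) (pairLine A B) ↔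
      ∀ v, eval (A.mulVec v) φ = eval (B.mulVec v) ψ := by
  constructor
  · intro h v
    have := h _ (LinearMap.mem_range_self (pairMap A B) v)
    rwa [eval_sepForm, fs_pairMap, sn_pairMap, sub_eq_zero] at this
  · rintro h _ ⟨v, rfl⟩
    rw [eval_sepForm, fs_pairMap, sn_pairMap, h, sub_self]

/-- Every line has a parametrization `v ↦ (A v, B v)`. -/
lemma IsLine.exists_pairLine {W : Submodule ℂ (Fin 4 → ℂ)} (hW : IsLine W) :
    ∃ A B : Matrix (Fin 2) (Fin 2) ℂ, W = pairLine A B ∧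
      ∀ v, A.mulVec v = 0 → B.mulVec v = 0 → v = 0 := by
  have e : (Fin 2 → ℂ) ≃ₗ[ℂ] W := LinearEquiv.ofFinrankEq _ _ (by rw [hW]; simp)
  let l : (Fin 2 → ℂ) →ₗ[ℂ] (Fin 4 → ℂ) := W.subtype ∘ₗ e.toLinearMap
  let F : (Fin 4 → ℂ) →ₗ[ℂ] (Fin 2 → ℂ) :=
    LinearMap.funLeft ℂ ℂ (fun i : Fin 2 => (⟨i.val, by omega⟩ : Fin 4))
  let S : (Fin 4 → ℂ) →ₗ[ℂ] (Fin 2 → ℂ) :=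
    LinearMap.funLeft ℂ ℂ (fun i : Fin 2 => (⟨i.val + 2, by omega⟩ : Fin 4))
  have hA : ∀ v, (LinearMap.toMatrix' (F ∘ₗ l)).mulVec v = fs (e v) := fun v => by
    rw [LinearMap.toMatrix'_mulVec]; exact fs_eq _
  have hB : ∀ v, (LinearMap.toMatrix' (S ∘ₗ l)).mulVec v = sn (e v) := fun v => by
    rw [LinearMap.toMatrix'_mulVec]; exact sn_eq _
  refine ⟨LinearMap.toMatrix' (F ∘ₗ l), LinearMap.toMatrix' (S ∘ₗ l), ?_, fun v h1 h2 => ?_⟩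
  · ext w
    rw [mem_pairLine]
    simp only [hA, hB]
    constructor
    · intro hw
      exact ⟨e.symm ⟨w, hw⟩, by simp⟩
    · rintro ⟨v, h1, h2⟩
      rw [ext_fs_sn h1 h2]
      exact (e v).2
  · rw [hA] at h1
    rw [hB] at h2
    have : ((e v : W) : Fin 4 → ℂ) = 0 := ext_fs_sn
      (h1.trans (by ext i; fin_cases i <;> rfl)) (h2.trans (by ext i; fin_cases i <;> rfl))
    simpa using this

/-- The line joining the point `(p, 0)` to the point `(0, q)`. -/
def joinLine (p q : Fin 2 → ℂ) : Submodule ℂ (Fin 4 → ℂ) :=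
  pairLine !![p 0, 0; p 1, 0] !![0, q 0; 0, q 1]

lemma joinLeft_mulVec (p v : Fin 2 → ℂ) : !![p 0, 0; p 1, 0].mulVec v = v 0 • p := by
  ext i; fin_cases i <;> simp [Matrix.mulVec, dotProduct] <;> ring

lemma joinRight_mulVec (q v : Fin 2 → ℂ) : !![0, q 0; 0, q 1].mulVec v = v 1 • q := by
  ext i; fin_cases i <;> simp [Matrix.mulVec, dotProduct] <;> ring

lemma mem_joinLine {p q : Fin 2 → ℂ} {w : Fin 4 → ℂ} :
    w ∈ joinLine p q ↔ ∃ s r : ℂ, fs w = s • p ∧ sn w = r • q := by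
  rw [joinLine, mem_pairLine]
  simp only [joinLeft_mulVec, joinRight_mulVec]
  constructor
  · rintro ⟨v, h⟩; exact ⟨_, _, h⟩
  · rintro ⟨s, r, h⟩; exact ⟨![s, r], h⟩

lemma isLine_joinLine {p q : Fin 2 → ℂ} (hp : p ≠ 0) (hq : q ≠ 0) : IsLine (joinLine p q) := by
  apply isLine_pairLine
  intro v h1 h2
  rw [joinLeft_mulVec] at h1
  rw [joinRight_mulVec] at h2
  ext i; fin_cases i
  · exact (smul_eq_zero.1 h1).resolve_right hp
  · exact (smul_eq_zero.1 h2).resolve_right hq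

section Lines

variable {d : ℕ} {φ ψ : MvPolynomial (Fin 2) ℂ} {c c' : ℂ} {p q : Fin d → Fin 2 → ℂ}

lemma liesOn_joinLine (h : IsSplit φ c p) (h' : IsSplit ψ c' q) (i j : Fin d) :
    LiesOn (sepForm φ ψ) (joinLine (p i) (q j)) := by
  refine liesOn_pairLine.2 fun v => ?_
  rw [joinLeft_mulVec, joinRight_mulVec, h.eval_smul, h'.eval_smul, h.eval_root, h'.eval_root]
  simp

/-- A line on the surface is the graph of an element of the transporter, or joins a zero of `φ`
to a zero of `ψ`. -/
lemma classify (h : IsSplit φ c p) (h' : IsSplit ψ c' q) (hd : 3 ≤ d)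
    {W : Submodule ℂ (Fin 4 → ℂ)} (hW : IsLine W) (hS : LiesOn (sepForm φ ψ) W) :
    (∃ i j, joinLine (p i) (q j) = W) ∨
      ∃ M : Transporter φ ψ, pairLine 1 M.1 = W := by
  obtain ⟨A, B, rfl, hAB⟩ := hW.exists_pairLine
  rw [liesOn_pairLine] at hS
  by_cases hdet : A.det = 0
  · left
    obtain ⟨v₀, hv₀, hA0⟩ := Matrix.exists_mulVec_eq_zero_iff.2 hdet
    have hB0 : B.mulVec v₀ ≠ 0 := fun h0 => hv₀ (hAB _ hA0 h0)
    have hz : eval (B.mulVec v₀) ψ = 0 := by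
      rw [← hS, hA0]
      have := h.eval_smul 0 0
      rw [zero_pow (by omega)] at this
      simpa using this
    obtain ⟨v₁, hv₁⟩ : ∃ v₁, br v₁ v₀ ≠ 0 := by
      by_contra! hc
      apply hv₀
      ext i; fin_cases i
      · simpa [br] using hc ![0, 1]
      · simpa [br] using hc ![1, 0]
    -- `φ (A v₁) = ψ (B v₁ + r B v₀)` for all `r`
    obtain ⟨k, hk⟩ := h'.exists_smul_of_const hd hB0 hz (w' := B.mulVec v₁)
      (C := eval (A.mulVec v₁) φ) fun r => by
        rw [← Matrix.mulVec_smul, ← Matrix.mulVec_add, ← hS, Matrix.mulVec_add,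
          Matrix.mulVec_smul, hA0, smul_zero, add_zero]
    have hB1 : B.mulVec (v₁ - k • v₀) = 0 := by
      rw [Matrix.mulVec_sub, Matrix.mulVec_smul, hk, sub_self]
    have hA1 : A.mulVec (v₁ - k • v₀) ≠ 0 := by
      intro h0
      have := sub_eq_zero.1 (hAB _ h0 hB1)
      rw [this, br_smul_left, br_self, mul_zero] at hv₁
      exact hv₁ rfl
    have hz1 : eval (A.mulVec (v₁ - k • v₀)) φ = 0 := by
      rw [hS, hB1]
      have := h'.eval_smul 0 0
      rw [zero_pow (by omega)] at this
      simpa using this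
    obtain ⟨i, s, hs, hi⟩ := h.exists_smul hA1 hz1
    obtain ⟨j, t, ht, hj⟩ := h'.exists_smul hB0 hz
    refine ⟨i, j, Submodule.eq_of_le_of_finrank_eq ?_
      ((isLine_joinLine (h.p_ne i) (h'.p_ne j)).trans hW.symm)⟩
    intro w hw
    obtain ⟨x, y, hx, hy⟩ := mem_joinLine.1 hw
    refine mem_pairLine.2 ⟨(x / s) • (v₁ - k • v₀) + (y / t) • v₀, ?_, ?_⟩
    · rw [Matrix.mulVec_add, Matrix.mulVec_smul, Matrix.mulVec_smul, hi, hA0, smul_smul,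
        div_mul_cancel₀ _ hs, hx]; simp
    · rw [Matrix.mulVec_add, Matrix.mulVec_smul, Matrix.mulVec_smul, hj, hB1, smul_smul,
        div_mul_cancel₀ _ ht, hy]; simp
  · right
    have hu : IsUnit A.det := isUnit_iff_ne_zero.2 hdet
    refine ⟨⟨B * A⁻¹, fun v => ?_⟩, ?_⟩
    · rw [← Matrix.mulVec_mulVec, ← hS, Matrix.mulVec_mulVec, Matrix.mul_nonsing_inv _ hu,
        Matrix.one_mulVec]
    · ext w
      simp only [mem_pairLine, Matrix.one_mulVec]
      constructor
      · rintro ⟨v, h1, h2⟩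
        refine ⟨A⁻¹.mulVec v, ?_, ?_⟩
        · rw [Matrix.mulVec_mulVec, Matrix.mul_nonsing_inv _ hu, Matrix.one_mulVec, h1]
        · rw [Matrix.mulVec_mulVec, h2]
      · rintro ⟨v, h1, h2⟩
        refine ⟨A.mulVec v, h1, ?_⟩
        rw [Matrix.mulVec_mulVec, Matrix.mul_assoc, Matrix.nonsing_inv_mul _ hu, Matrix.mul_one,
          h2]

/-- The lines on the surface, enumerated without repetition. -/
lemma exists_lines_equiv (h : IsSplit φ c p) (h' : IsSplit ψ c' q) (hd : 3 ≤ d) :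
    Nonempty ((Fin d × Fin d) ⊕ Transporter φ ψ ≃
      {W : Submodule ℂ (Fin 4 → ℂ) // IsLine W ∧ LiesOn (sepForm φ ψ) W}) := by
  let f : (Fin d × Fin d) ⊕ Transporter φ ψ →
      {W : Submodule ℂ (Fin 4 → ℂ) // IsLine W ∧ LiesOn (sepForm φ ψ) W} :=
    Sum.elim
      (fun x => ⟨joinLine (p x.1) (q x.2), isLine_joinLine (h.p_ne _) (h'.p_ne _),
        liesOn_joinLine h h' _ _⟩)
      (fun M => ⟨pairLine 1 M.1, isLine_pairLine fun v h1 _ => by simpa using h1,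
        liesOn_pairLine.2 fun v => by rw [Matrix.one_mulVec, M.2]⟩)
  have hfs : ∀ x y : Fin 2 → ℂ, fs ![x 0, x 1, y 0, y 1] = x := fun x y => by
    ext i; fin_cases i <;> rfl
  have hsn : ∀ x y : Fin 2 → ℂ, sn ![x 0, x 1, y 0, y 1] = y := fun x y => by
    ext i; fin_cases i <;> rfl
  -- the point `(0, q j)` lies on a joining line but on no graph
  have hmix : ∀ i j (M : Matrix (Fin 2) (Fin 2) ℂ), joinLine (p i) (q j) ≠ pairLine 1 M := by
    intro i j M heq
    have hm : ![(0 : Fin 2 → ℂ) 0, (0 : Fin 2 → ℂ) 1, q j 0, q j 1] ∈ joinLine (p i) (q j) :=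
      mem_joinLine.2 ⟨0, 1, by rw [hfs, zero_smul], by rw [hsn, one_smul]⟩
    rw [heq, mem_pairLine] at hm
    obtain ⟨v, h1, h2⟩ := hm
    rw [hfs, Matrix.one_mulVec] at h1
    rw [hsn, ← h1, Matrix.mulVec_zero] at h2
    exact h'.p_ne j h2
  refine ⟨Equiv.ofBijective f ⟨?_, ?_⟩⟩
  · rintro (⟨i, j⟩ | M) (⟨i', j'⟩ | N) hab
    · have hab' : joinLine (p i) (q j) = joinLine (p i') (q j') := congrArg Subtype.val hab
      have hm : ![p i 0, p i 1, q j 0, q j 1] ∈ joinLine (p i) (q j) :=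
        mem_joinLine.2 ⟨1, 1, by rw [hfs, one_smul], by rw [hsn, one_smul]⟩
      rw [hab', mem_joinLine] at hm
      obtain ⟨s, r, h1, h2⟩ := hm
      rw [hfs] at h1
      rw [hsn] at h2
      have e1 : i = i' := h.index_eq (h.p_ne i) (br_self _)
        (by nth_rewrite 1 [h1]; rw [br_smul_left, br_self, mul_zero])
      have e2 : j = j' := h'.index_eq (h'.p_ne j) (br_self _)
        (by nth_rewrite 1 [h2]; rw [br_smul_left, br_self, mul_zero])
      rw [e1, e2]
    · exact absurd (congrArg Subtype.val hab) (hmix i j N.1)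
    · exact absurd (congrArg Subtype.val hab).symm (hmix i' j' M.1)
    · have hab' : pairLine 1 M.1 = pairLine 1 N.1 := congrArg Subtype.val hab
      congr 1
      apply Subtype.ext
      apply Matrix.toLin'.injective
      apply LinearMap.ext
      intro v
      have hm : ![v 0, v 1, M.1.mulVec v 0, M.1.mulVec v 1] ∈ pairLine 1 M.1 :=
        mem_pairLine.2 ⟨v, by rw [hfs, Matrix.one_mulVec], by rw [hsn]⟩
      rw [hab', mem_pairLine] at hm
      obtain ⟨v', h1, h2⟩ := hm
      rw [hfs, Matrix.one_mulVec] at h1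
      rw [hsn, ← h1] at h2
      simpa using h2
  · rintro ⟨W, hW, hS⟩
    rcases classify h h' hd hW hS with ⟨i, j, hij⟩ | ⟨M, hM⟩
    · exact ⟨Sum.inl (i, j), Subtype.ext hij⟩
    · exact ⟨Sum.inr M, Subtype.ext hM⟩

end Lines

/-- The number of lines on a smooth surface `φ(x,y) - ψ(z,t) = 0` of degree `d ≥ 3`
is exactly `d(d + α)` where `α` is the number of projectivities of ℙ¹ mapping
`Z(φ)` onto `Z(ψ)`. -/
theorem card_lines_sepForm (d : ℕ) (hd : 3 ≤ d)
    (φ ψ : MvPolynomial (Fin 2) ℂ)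
    (hφ : φ.IsHomogeneous d) (hψ : ψ.IsHomogeneous d)
    (hsmooth : SmoothSurface (sepForm φ ψ)) :
    Nat.card {W : Submodule ℂ (Fin 4 → ℂ) // IsLine W ∧ LiesOn (sepForm φ ψ) W} =
      d * (d + numProjectivities φ ψ) := by
  obtain ⟨c, p, h⟩ := exists_isSplit hφ (smooth_left hd hψ hsmooth)
  obtain ⟨c', q, h'⟩ := exists_isSplit hψ (smooth_right hd hφ hsmooth)
  obtain ⟨e⟩ := exists_lines_equiv h h' hd
  have := finite_transporter h h' hd
  rw [← Nat.card_congr e, Nat.card_sum, Nat.card_prod, Nat.card_fin, card_transporter h h' hd,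
    mul_add]
end

section
/- Let φ, ψ ∈ ℂ[x,y] be homogeneous binary forms of degree d ≥ 2 such that the surface S : φ(x,y) − ψ(z,t) = 0 is smooth, and let L : z = t = 0 and L′ : x = y = 0. If a line W lies on S and W ∩ L = {0}, then also W ∩ L′ = {0}. -/
/-!
Suppose `p ≠ 0` lies in `W ∩ L'`, so `p = (0, 0, z, t)`. The differential of
`F = φ(x, y) - ψ(z, t)` at `p` vanishes on `W`, because `F` vanishes on the linear space `W`
containing `p` (`sum_mul_pderiv_eq_zero`). It also vanishes on `L`: the partials in `x` and `y`
are those of `φ` at the origin, and these are zero since `φ` is homogeneous of degree at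
least two (`eval_pderiv_sepForm_eq_zero`). As `W` and `L` are planes meeting only in `0`, they
span `ℂ⁴`, so the whole differential is zero and `p` is a singular point of the surface,
contrary to hypothesis.
-/

open MvPolynomial

/-- The line `L : z = t = 0`. -/
noncomputable def lineL : Submodule ℂ (Fin 4 → ℂ) :=
  Submodule.span ℂ {![1,0,0,0], ![0,1,0,0]}

/-- The line `L' : x = y = 0`. -/
noncomputable def lineL' : Submodule ℂ (Fin 4 → ℂ) :=
  Submodule.span ℂ {![0,0,1,0], ![0,0,0,1]}

/-- The chain rule for a polynomial restricted to the parametrised line `s ↦ p + s v`. -/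
lemma derivative_aeval_line {n : ℕ} (F : MvPolynomial (Fin n) ℂ) (p v : Fin n → ℂ) :
    Polynomial.derivative
        (aeval (fun i => Polynomial.C (p i) + Polynomial.C (v i) * Polynomial.X) F) =
      ∑ i, Polynomial.C (v i) *
        aeval (fun i => Polynomial.C (p i) + Polynomial.C (v i) * Polynomial.X)
          (pderiv i F) := by
  induction F using MvPolynomial.induction_on with
  | C a => simp
  | add f g hf hg => simp only [map_add, hf, hg, mul_add, Finset.sum_add_distrib]
  | mul_X f j hf =>
    rw [map_mul, Polynomial.derivative_mul, hf]
    simp only [Derivation.leibniz, pderiv_X, smul_eq_mul, map_add, map_mul, aeval_X, mul_add,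
      Finset.sum_add_distrib, Finset.sum_mul]
    rw [add_comm]
    congr 1
    · rw [Finset.sum_eq_single j]
      · simp
        ring
      · intro i _ hij
        simp [hij.symm]
      · simp
    · rw [← Finset.sum_add_distrib]
      exact Finset.sum_congr rfl fun i _ => by ring

lemma eval_aeval_line {n : ℕ} (F : MvPolynomial (Fin n) ℂ) (p v : Fin n → ℂ) (s : ℂ) :
    Polynomial.eval s
        (aeval (fun i => Polynomial.C (p i) + Polynomial.C (v i) * Polynomial.X) F) =
      eval (p + s • v) F := by
  induction F using MvPolynomial.induction_on with
  | C a => simp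
  | add f g hf hg => simp only [map_add, Polynomial.eval_add, hf, hg]
  | mul_X f j hf =>
    simp only [map_mul, Polynomial.eval_mul, hf, aeval_X, eval_X]
    simp [mul_comm s]

/-- If `F` vanishes on a linear subspace, its differential at a point of the subspace
vanishes on the subspace. -/
lemma sum_mul_pderiv_eq_zero {F : MvPolynomial (Fin 4) ℂ} {W : Submodule ℂ (Fin 4 → ℂ)}
    (hF : LiesOn F W) {p v : Fin 4 → ℂ} (hp : p ∈ W) (hv : v ∈ W) :
    ∑ i, v i * eval p (pderiv i F) = 0 := by
  have h0 : aeval (fun i => Polynomial.C (p i) + Polynomial.C (v i) * Polynomial.X) F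
      = (0 : Polynomial ℂ) := by
    refine Polynomial.funext fun s => ?_
    rw [eval_aeval_line, hF _ (W.add_mem hp (W.smul_mem s hv)), Polynomial.eval_zero]
  have h := congrArg (Polynomial.eval 0) (derivative_aeval_line F p v)
  rw [h0] at h
  simpa [Polynomial.eval_finsetSum, eval_aeval_line] using h.symm

/-- The partials in `x` and `y` of `φ(x, y) - ψ(z, t)` vanish along `L'`. -/
lemma eval_pderiv_sepForm_eq_zero {d : ℕ} (hd : 2 ≤ d) {φ : MvPolynomial (Fin 2) ℂ}
    (ψ : MvPolynomial (Fin 2) ℂ) (hφ : φ.IsHomogeneous d) {p : Fin 4 → ℂ}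
    (h0 : p 0 = 0) (h1 : p 1 = 0) (j : Fin 2) :
    eval p (pderiv (⟨j.val, by omega⟩ : Fin 4) (sepForm φ ψ)) = 0 := by
  have hinj : Function.Injective (fun i : Fin 2 => (⟨i.val, by omega⟩ : Fin 4)) := by
    intro a b h
    simpa [Fin.ext_iff] using h
  have hψ : pderiv (⟨j.val, by omega⟩ : Fin 4)
      (rename (fun i : Fin 2 => (⟨i.val + 2, by omega⟩ : Fin 4)) ψ) = 0 := by
    classical
    refine pderiv_eq_zero_of_notMem_vars fun h => ?_
    obtain ⟨i, -, hi⟩ := Finset.mem_image.1 (vars_rename _ _ h)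
    have := congrArg Fin.val hi
    simp only at this
    omega
  have hp : p ∘ (fun i : Fin 2 => (⟨i.val, by omega⟩ : Fin 4)) = 0 := by
    ext i
    fin_cases i
    · exact h0
    · exact h1
  rw [sepForm, map_sub, hψ, sub_zero, pderiv_rename hinj, eval_rename, hp, eval_zero]
  exact hφ.pderiv.coeff_eq_zero (by simp; omega)

lemma finrank_lineL : Module.finrank ℂ lineL = 2 := by
  have h : LinearIndependent ℂ ![(![1,0,0,0] : Fin 4 → ℂ), ![0,1,0,0]] := by
    rw [LinearIndependent.pair_iff]
    intro s t h
    exact ⟨by simpa using congrFun h 0, by simpa using congrFun h 1⟩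
  rw [lineL, ← Matrix.range_cons_cons_empty _ _ ![], finrank_span_eq_card h, Fintype.card_fin]

lemma apply_eq_zero_of_mem_lineL' {p : Fin 4 → ℂ} (hp : p ∈ lineL') :
    p 0 = 0 ∧ p 1 = 0 := by
  obtain ⟨a, b, rfl⟩ := Submodule.mem_span_pair.1 hp
  simp

/-- If a line `W` lies on the smooth surface `φ(x,y) - ψ(z,t) = 0` and `W ∩ L = {0}`,
then also `W ∩ L' = {0}`. -/
theorem line_avoiding_L_avoids_L' (d : ℕ) (hd : 2 ≤ d)
    (φ ψ : MvPolynomial (Fin 2) ℂ)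
    (hφ : φ.IsHomogeneous d) (hψ : ψ.IsHomogeneous d)
    (hsmooth : SmoothSurface (sepForm φ ψ))
    (W : Submodule ℂ (Fin 4 → ℂ)) (hW : IsLine W)
    (hWS : LiesOn (sepForm φ ψ) W)
    (hL : W ⊓ lineL = ⊥) :
    W ⊓ lineL' = ⊥ := by
  rw [Submodule.eq_bot_iff]
  rintro p ⟨hpW, hpL⟩
  by_contra hp
  obtain ⟨h0, h1⟩ := apply_eq_zero_of_mem_lineL' hpL
  obtain ⟨k, hk⟩ := hsmooth p hp
  -- The differential of the equation at `p`.
  let D : (Fin 4 → ℂ) →ₗ[ℂ] ℂ :=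
    Fintype.linearCombination ℂ fun i => eval p (pderiv i (sepForm φ ψ))
  have hD (v : Fin 4 → ℂ) : D v = ∑ i, v i * eval p (pderiv i (sepForm φ ψ)) := by
    simp [D, Fintype.linearCombination_apply]
  have hWD : W ≤ LinearMap.ker D := fun v hv => by
    rw [LinearMap.mem_ker, hD, sum_mul_pderiv_eq_zero hWS hpW hv]
  have hLD : lineL ≤ LinearMap.ker D := by
    have e0 : eval p (pderiv 0 (sepForm φ ψ)) = 0 :=
      eval_pderiv_sepForm_eq_zero hd ψ hφ h0 h1 0
    have e1 : eval p (pderiv 1 (sepForm φ ψ)) = 0 :=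
      eval_pderiv_sepForm_eq_zero hd ψ hφ h0 h1 1
    rw [lineL, Submodule.span_le]
    rintro v (rfl | rfl) <;> simp [hD, Fin.sum_univ_four, e0, e1]
  have htop : W ⊔ lineL = ⊤ :=
    Submodule.eq_top_of_disjoint _ _
      (by rw [hW, finrank_lineL]; simp) (disjoint_iff.2 hL)
  have hk0 : D (Pi.single k 1) = 0 :=
    (htop ▸ sup_le hWD hLD : ⊤ ≤ LinearMap.ker D) trivial
  exact hk (by simpa [hD, Pi.single_apply] using hk0)
end
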